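/- Let u ∈ F₂, let m ≥ 0 be an integer, let ψ₁ be a chain of type (C1) containing at least ‖u‖+1 factors of σ, and set ψ = τ^m σ ψ₁ (so that ψ is a chain of type (C1) containing at least ‖u‖+2 factors of σ). Then, as integers, ‖σψ(u)‖ − ‖ψ(u)‖ = ‖σ τ^m ψ₁(u)‖ − ‖τ^m ψ₁(u)‖ + m·(‖σψ₁(u)‖ − ‖ψ₁(u)‖). -/

import Mathlib

noncomputable section

/-- The free group of rank two. -/
abbrev F : Type := FreeGroup (Fin 2)

/-- The generator `a`. -/
def ga : F := FreeGroup.of 0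

/-- The generator `b`. -/
def gb : F := FreeGroup.of 1

/-- Build an automorphism of `F` from images of the generators together with
an explicit inverse. -/
def mkAut (x y xi yi : F)
    (h1 : FreeGroup.lift ![xi, yi] x = ga)
    (h2 : FreeGroup.lift ![xi, yi] y = gb)
    (h3 : FreeGroup.lift ![x, y] xi = ga)
    (h4 : FreeGroup.lift ![x, y] yi = gb) : MulAut F :=
  MonoidHom.toMulEquiv (FreeGroup.lift ![x, y]) (FreeGroup.lift ![xi, yi])
    (by
      ext i
      fin_cases i
      · simpa [ga] using h1
      · simpa [gb] using h2)
    (by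
      ext i
      fin_cases i
      · simpa [ga] using h3
      · simpa [gb] using h4)

/-- `σ : a ↦ ab, b ↦ b`. -/
def σ : MulAut F :=
  mkAut (ga * gb) gb (ga * gb⁻¹) gb
    (by simp [ga, gb]) (by simp [ga, gb]) (by simp [ga, gb]) (by simp [ga, gb])

/-- `τ : a ↦ a, b ↦ ba`. -/
def τ : MulAut F :=
  mkAut ga (gb * ga) ga (gb * ga⁻¹)
    (by simp [ga, gb]) (by simp [ga, gb]) (by simp [ga, gb]) (by simp [ga, gb])

/-- `δ₁ : a ↦ b⁻¹ab, b ↦ b`. -/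
def δ₁ : MulAut F :=
  mkAut (gb⁻¹ * ga * gb) gb (gb * ga * gb⁻¹) gb
    (by simp [ga, gb, mul_assoc]) (by simp [ga, gb]) (by simp [ga, gb, mul_assoc]) (by simp [ga, gb])

/-- `δ₂ : a ↦ bab⁻¹, b ↦ b`. -/
def δ₂ : MulAut F :=
  mkAut (gb * ga * gb⁻¹) gb (gb⁻¹ * ga * gb) gb
    (by simp [ga, gb, mul_assoc]) (by simp [ga, gb]) (by simp [ga, gb, mul_assoc]) (by simp [ga, gb])

/-- `δ₃ : a ↦ a, b ↦ a⁻¹ba`. -/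
def δ₃ : MulAut F :=
  mkAut ga (ga⁻¹ * gb * ga) ga (ga * gb * ga⁻¹)
    (by simp [ga, gb]) (by simp [ga, gb, mul_assoc]) (by simp [ga, gb]) (by simp [ga, gb, mul_assoc])

/-- `δ₄ : a ↦ a, b ↦ aba⁻¹`. -/
def δ₄ : MulAut F :=
  mkAut ga (ga * gb * ga⁻¹) ga (ga⁻¹ * gb * ga)
    (by simp [ga, gb]) (by simp [ga, gb, mul_assoc]) (by simp [ga, gb]) (by simp [ga, gb, mul_assoc])

/-- `π : a ↦ b, b ↦ a⁻¹`. -/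
def pi' : MulAut F :=
  mkAut gb ga⁻¹ gb⁻¹ ga
    (by simp [ga, gb]) (by simp [ga, gb]) (by simp [ga, gb]) (by simp [ga, gb])

/-- Word length of (the reduced word representing) an element of `F`. -/
def len (w : F) : ℕ := w.toWord.length

/-- Cyclic length: minimal word length among all conjugates. -/
def cyclen (w : F) : ℕ := sInf {n | ∃ g : F, len (g * w * g⁻¹) = n}

/-- The chain `τ^{m_k}σ^{l_k}⋯τ^{m_1}σ^{l_1}` of type (C1) determined by the list
`[(l_k, m_k), …, (l_1, m_1)]` of pairs of exponents. -/
def chainC1 (c : List (ℕ × ℕ)) : MulAut F :=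
  (c.map fun p => τ ^ p.2 * σ ^ p.1).prod

/-- The chain `τ^{-m_k}σ^{-l_k}⋯τ^{-m_1}σ^{-l_1}` of type (C2) determined by the list
`[(l_k, m_k), …, (l_1, m_1)]` of pairs of exponents. -/
def chainC2 (c : List (ℕ × ℕ)) : MulAut F :=
  (c.map fun p => (τ ^ p.2)⁻¹ * (σ ^ p.1)⁻¹).prod

/-- Number of factors of `σ` in a chain. -/
def sigmaCount (c : List (ℕ × ℕ)) : ℕ := (c.map Prod.fst).sum

/-- Number of factors of `τ` in a chain. -/
def tauCount (c : List (ℕ × ℕ)) : ℕ := (c.map Prod.snd).sum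

/-- The length `Σ (l_i + m_i)` of a chain. -/
def chainLen (c : List (ℕ × ℕ)) : ℕ := sigmaCount c + tauCount c

/-- A Whitehead automorphism of type (W1): it permutes `{a, a⁻¹, b, b⁻¹}`. -/
def IsW1 (β : MulAut F) : Prop :=
  β ga ∈ ({ga, ga⁻¹, gb, gb⁻¹} : Set F) ∧ β gb ∈ ({ga, ga⁻¹, gb, gb⁻¹} : Set F)

/-- A chain of type (C1). -/
def IsC1 (φ : MulAut F) : Prop := ∃ c : List (ℕ × ℕ), c ≠ [] ∧ φ = chainC1 c

/-- A chain of type (C2). -/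
def IsC2 (φ : MulAut F) : Prop := ∃ c : List (ℕ × ℕ), c ≠ [] ∧ φ = chainC2 c

/-- A positive element: a product of the generators `a` and `b`. -/
def IsPositive (w : F) : Prop := w ∈ Submonoid.closure ({ga, gb} : Set F)

/-- The four automorphisms `δ₁, δ₂, δ₃, δ₄`. -/
def δIdx : Fin 4 → MulAut F := ![δ₁, δ₂, δ₃, δ₄]

/-!
Cut the cyclic word of `w ∈ F₂` where the sign of the exponents changes. A transvection such as `σ`
inserts a letter after (or, for negative exponents, before) each letter `a^{±1}`, and between two
consecutive blocks the inserted letters cancel: `σ` and `τ` act on each block separately, sending it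
to its image without one fixed letter at the end. A block of `k` letters thus becomes one with
`k - 1` fixed letters, so for `n_a`, `n_b` the numbers of letters `a^{±1}`, `b^{±1}` and for `L` the
sequence of blocks, `‖σ w‖ - ‖w‖ = n_a - |L|`.

A block disappears precisely when it is the single fixed letter; its neighbours then merge. The
total length of the blocks that are powers of `b` is at most `‖u‖` for `u`, does not grow under `τ`,
and drops with each `σ` until it is `0`, so after `‖u‖ + 1` factors `σ` every block is a single
`a^{±1}` or contains both generators. Let `s` be the number of blocks of the first kind. From then
on `σ` preserves `|L|` and `s`, while `τ` deletes the `s` single blocks, merges their neighbours and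
creates no new single ones. Counting letters gives
`‖σ τ^m w‖ - ‖τ^m w‖ = n_a - |L| + m (n_b - |L| + 2 s)`,
and the theorem compares this formula for `w = ψ₁(u)` and for `w = σ ψ₁(u)`.
-/

section CyclicallyReduced

variable {α : Type*}

theorem chain_imp_of_mem {r s : α → α → Prop} {l : Cycle α}
    (h : ∀ a ∈ l, ∀ b ∈ l, r a b → s a b) (hl : l.Chain r) : l.Chain s := by
  induction l using Quotient.inductionOn with
  | _ l =>
    cases l with
    | nil => trivial
    | cons x l =>
      refine List.IsChain.imp_of_mem_imp (fun a b ha hb => h a ?_ b ?_) hl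
      · simpa [or_comm] using ha
      · simpa [or_comm] using hb

theorem isCyclicallyReduced_iff_chain {M : List (α × Bool)} :
    FreeGroup.IsCyclicallyReduced M ↔
      (M : Cycle (α × Bool)).Chain fun a b => a.1 = b.1 → a.2 = b.2 := by
  cases M with
  | nil => simp
  | cons x l =>
    rw [Cycle.chain_coe_cons, ← List.cons_append, List.isChain_append]
    simp [FreeGroup.IsCyclicallyReduced, FreeGroup.IsReduced]

theorem exists_isCyclicallyReduced_isConj (u : FreeGroup α) :
    ∃ M, FreeGroup.IsCyclicallyReduced M ∧ IsConj u (FreeGroup.mk M) := by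
  classical
  refine ⟨FreeGroup.reduceCyclically u.toWord,
    FreeGroup.reduceCyclically.isCyclicallyReduced FreeGroup.isReduced_toWord,
    (isConj_iff.2 ⟨FreeGroup.mk (FreeGroup.reduceCyclically.conjugator u.toWord), ?_⟩).symm⟩
  rw [FreeGroup.inv_mk, FreeGroup.mul_mk, FreeGroup.mul_mk,
    FreeGroup.reduceCyclically.conj_conjugator_reduceCyclically, FreeGroup.mk_toWord]

variable [DecidableEq α]

theorem freeGroup_norm_pow_le (x : FreeGroup α) (n : ℕ) : (x ^ n).norm ≤ n * x.norm := by
  induction n with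
  | zero => simp
  | succ n ih =>
    calc (x ^ (n + 1)).norm ≤ (x ^ n).norm + x.norm := by
          rw [pow_succ]; exact FreeGroup.norm_mul_le _ _
      _ ≤ (n + 1) * x.norm := by linarith

theorem norm_mk_pow {M : List (α × Bool)} (hM : FreeGroup.IsCyclicallyReduced M) (n : ℕ) :
    (FreeGroup.mk M ^ n).norm = n * M.length := by
  rw [FreeGroup.norm, FreeGroup.toWord_pow, FreeGroup.toWord_mk, hM.isReduced.reduce_eq,
    (hM.flatten_replicate n).isReduced.reduce_eq]
  simp

-- `n * |M| = |M ^ n| ≤ 2 * |g| + n * |g M g⁻¹|` for all `n`; taking `n` large gives the claim.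
theorem length_le_norm_conj {M : List (α × Bool)} (hM : FreeGroup.IsCyclicallyReduced M)
    (g : FreeGroup α) : M.length ≤ (g * FreeGroup.mk M * g⁻¹).norm := by
  set x := g * FreeGroup.mk M * g⁻¹ with hx
  have hgrowth (n : ℕ) : n * M.length ≤ 2 * g.norm + n * x.norm := by
    have hconj : FreeGroup.mk M ^ n = g⁻¹ * x ^ n * g := by rw [hx, conj_pow]; group
    calc n * M.length = (g⁻¹ * x ^ n * g).norm := by rw [← hconj, norm_mk_pow hM]
      _ ≤ (g⁻¹ * x ^ n).norm + g.norm := FreeGroup.norm_mul_le _ _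
      _ ≤ (g⁻¹.norm + (x ^ n).norm) + g.norm := by gcongr; exact FreeGroup.norm_mul_le _ _
      _ ≤ (g.norm + n * x.norm) + g.norm := by
          rw [FreeGroup.norm_inv_eq]; gcongr; exact freeGroup_norm_pow_le x n
      _ = 2 * g.norm + n * x.norm := by ring
  by_contra! hlt
  nlinarith [hgrowth (2 * g.norm + 1)]

end CyclicallyReduced

/-- A piece of constant sign of a word in a free group: the letters `word`, in reading order, all
raised to the power `1` (if `sign` is true) or `-1` (if `sign` is false). Every cyclically reduced
word is a cyclic sequence of such pieces. -/
structure SignedBlock (α : Type*) where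
  /-- The underlying generators, in reading order (also for the sign `-1`). -/
  word : List α
  /-- The common sign of the letters. -/
  sign : Bool

namespace SignedBlock

variable {α : Type*}

/-- The signed letters of a block, in the encoding used by `FreeGroup.mk`. -/
def letters (e : SignedBlock α) : List (α × Bool) := e.word.map (·, e.sign)

/-- The junction condition between consecutive blocks of a reduced word. Empty blocks are tolerated
so that cancelled blocks can be recorded, but not two in a row. -/
def Abuts (e f : SignedBlock α) : Prop :=
  e.sign ≠ f.sign ∧ (e.word = [] → f.word ≠ []) ∧
    ∀ x ∈ e.word.getLast?, ∀ y ∈ f.word.head?, x ≠ y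

/-- The free group element spelled by a list of blocks. -/
def spell (L : List (SignedBlock α)) : FreeGroup α := FreeGroup.mk (L.flatMap letters)

/-- Consecutive blocks abut, cyclically. -/
def IsAlternating (L : List (SignedBlock α)) : Prop :=
  (L : Cycle (SignedBlock α)).Chain Abuts

/-- A cyclically alternating list of nonempty blocks. It is the decomposition of a cyclically
reduced word into its maximal constant-sign pieces. -/
def IsStrict (L : List (SignedBlock α)) : Prop :=
  IsAlternating L ∧ ∀ e ∈ L, e.word ≠ []

theorem letters_ne_nil {e : SignedBlock α} (h : e.word ≠ []) : e.letters ≠ [] := by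
  simpa [letters] using h

theorem spell_append (L₁ L₂ : List (SignedBlock α)) :
    spell (L₁ ++ L₂) = spell L₁ * spell L₂ := by
  simp [spell, FreeGroup.mul_mk]

theorem spell_cons (e : SignedBlock α) (L : List (SignedBlock α)) :
    spell (e :: L) = spell [e] * spell L :=
  spell_append [e] L

theorem isConj_spell_of_isRotated {L L' : List (SignedBlock α)} (h : L ~r L') :
    IsConj (spell L) (spell L') := by
  obtain ⟨k, rfl⟩ := h
  have hL : spell L = spell (L.take (k % L.length)) * spell (L.drop (k % L.length)) := by
    rw [← spell_append, List.take_append_drop]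
  refine isConj_iff.2 ⟨(spell (L.take (k % L.length)))⁻¹, ?_⟩
  simp [hL, List.rotate_eq_drop_append_take_mod, spell_append]

theorem isReduced_letters (e : SignedBlock α) : FreeGroup.IsReduced e.letters := by
  refine (List.isChain_map _).2 (List.Pairwise.isChain ?_)
  exact List.pairwise_of_forall fun _ _ _ => rfl

theorem isCyclicallyReduced_letters (e : SignedBlock α) :
    FreeGroup.IsCyclicallyReduced e.letters := by
  refine ⟨isReduced_letters e, fun a ha b hb _ => ?_⟩
  have ha := List.mem_of_mem_getLast? ha
  have hb := List.mem_of_mem_head? hb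
  simp only [letters, List.mem_map] at ha hb
  grind

theorem Abuts.isReduced_junction {e f : SignedBlock α} (h : Abuts e f) :
    ∀ a ∈ e.letters.getLast?, ∀ b ∈ f.letters.head?, a.1 = b.1 → a.2 = b.2 := by
  simp only [letters, List.getLast?_map, List.head?_map, Option.mem_def, Option.map_eq_some_iff]
  rintro _ ⟨x, hx, rfl⟩ _ ⟨y, hy, rfl⟩ hxy
  exact absurd hxy (h.2.2 x hx y hy)

theorem IsStrict.isCyclicallyReduced {L : List (SignedBlock α)} (h : IsStrict L) :
    FreeGroup.IsCyclicallyReduced (L.flatMap letters) := by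
  cases L with
  | nil => exact FreeGroup.IsCyclicallyReduced.nil
  | cons e l =>
    obtain ⟨hchain, hne⟩ := h
    have he : e.letters ≠ [] := letters_ne_nil (hne e (by simp))
    have hred : FreeGroup.IsReduced (((e :: l) ++ [e]).map letters).flatten := by
      refine (List.isChain_flatten ?_).2 ⟨?_, ?_⟩
      · simp only [List.mem_map, not_exists, not_and]
        intro f hf
        exact letters_ne_nil (hne f (by simpa [or_comm] using hf))
      · simp only [List.mem_map, forall_exists_index, and_imp, forall_apply_eq_imp_iff₂]
        exact fun f _ => isReduced_letters f
      · exact (List.isChain_map _).2 (List.IsChain.imp (fun _ _ => Abuts.isReduced_junction) hchain)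
    rw [List.map_append, List.flatten_append, FreeGroup.IsReduced, List.isChain_append] at hred
    refine ⟨hred.1, fun a ha b hb => hred.2.2 a ha b ?_⟩
    simpa [List.head?_append_of_ne_nil _ he] using hb

theorem Abuts.append_left {X Y : List α} {s : Bool} {e : SignedBlock α} (hY : Y ≠ [])
    (h : Abuts ⟨Y, s⟩ e) : Abuts ⟨X ++ Y, s⟩ e :=
  ⟨h.1, by simp [hY], by simpa [List.getLast?_append_of_ne_nil _ hY] using h.2.2⟩

theorem Abuts.append_right {X Y : List α} {s : Bool} {e : SignedBlock α} (hX : X ≠ [])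
    (h : Abuts e ⟨X, s⟩) : Abuts e ⟨X ++ Y, s⟩ :=
  ⟨h.1, by simp [hX], by simpa [List.head?_append_of_ne_nil _ hX] using h.2.2⟩

theorem IsAlternating.merge {X Y : List α} {s s' s'' : Bool} {L : List (SignedBlock α)}
    (h : IsAlternating (⟨X, s⟩ :: ⟨[], s'⟩ :: ⟨Y, s''⟩ :: L)) :
    s'' = s ∧ X ≠ [] ∧ Y ≠ [] ∧ IsAlternating (⟨X ++ Y, s⟩ :: L) := by
  simp only [IsAlternating, Cycle.chain_coe_cons, List.cons_append, List.isChain_cons_cons] at h ⊢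
  obtain ⟨hX, hY, hL⟩ := h
  have hsign : s'' = s := by
    have h₁ := hX.1
    have h₂ := hY.1
    revert h₁ h₂
    cases s <;> cases s' <;> cases s'' <;> simp
  subst hsign
  have hXne : X ≠ [] := fun h => hX.2.1 h rfl
  have hYne : Y ≠ [] := hY.2.1 rfl
  refine ⟨rfl, hXne, hYne, ?_⟩
  cases L with
  | nil => exact absurd rfl (List.isChain_pair.1 hL).1
  | cons f L =>
    rw [List.cons_append, List.isChain_cons_cons, ← List.cons_append] at hL ⊢
    refine ⟨hL.1.append_left hYne, ?_⟩
    have hfL := List.isChain_append.1 hL.2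
    refine List.isChain_append.2 ⟨hfL.1, List.isChain_singleton _, fun a ha b hb => ?_⟩
    obtain rfl : ⟨X ++ Y, s''⟩ = b := by simpa using hb
    exact (hfL.2.2 a ha _ rfl).append_right hXne

theorem exists_abuts_chain_of_letter {x y : α × Bool} (h : x.1 = y.1 → x.2 = y.2) :
    ∃ t : List (SignedBlock α), t.flatMap letters = [] ∧
      (⟨[x.1], x.2⟩ :: (t ++ [⟨[y.1], y.2⟩])).IsChain Abuts := by
  by_cases hs : x.2 = y.2
  · exact ⟨[⟨[], !x.2⟩], by simp [letters], by simp [Abuts, hs]⟩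
  · exact ⟨[], rfl, by simpa [Abuts, hs] using mt h hs⟩

theorem exists_abuts_chain_of_letters (x z : α × Bool) (l : List (α × Bool))
    (h : FreeGroup.IsReduced (x :: (l ++ [z]))) :
    ∃ t : List (SignedBlock α), t.flatMap letters = l ∧
      (⟨[x.1], x.2⟩ :: (t ++ [⟨[z.1], z.2⟩])).IsChain Abuts := by
  induction l generalizing x with
  | nil => exact exists_abuts_chain_of_letter (List.isChain_pair.1 h)
  | cons y l ih =>
    rw [List.cons_append, FreeGroup.isReduced_cons_cons] at h
    obtain ⟨t₁, ht₁, hchain₁⟩ := exists_abuts_chain_of_letter h.1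
    obtain ⟨t₂, ht₂, hchain₂⟩ := ih y h.2
    refine ⟨t₁ ++ ⟨[y.1], y.2⟩ :: t₂, by simp [ht₁, ht₂, letters], ?_⟩
    rw [List.append_assoc, List.cons_append, List.isChain_cons_split]
    exact ⟨hchain₁, hchain₂⟩

theorem exists_isAlternating_spell_eq {M : List (α × Bool)}
    (hM : FreeGroup.IsCyclicallyReduced M) :
    ∃ L : List (SignedBlock α), IsAlternating L ∧ spell L = FreeGroup.mk M := by
  cases M with
  | nil => exact ⟨[], Cycle.Chain.nil _, rfl⟩
  | cons x l =>
    obtain ⟨t, ht, hchain⟩ :=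
      exists_abuts_chain_of_letters x x l (isCyclicallyReduced_iff_chain.1 hM)
    exact ⟨_ :: t, hchain, by simp [spell, ht, letters]⟩

/-- `M` results from the alternating list `L` by deleting the empty blocks, whose neighbours have
the same sign and are merged. -/
inductive Collapses : List (SignedBlock α) → List (SignedBlock α) → Prop
  | refl {L} : (∀ e ∈ L, e.word ≠ []) → Collapses L L
  | rotate {L L' M} : L ~r L' → Collapses L' M → Collapses L M
  | merge {X Y s s' L M} : X ≠ [] → Y ≠ [] → Collapses (⟨X ++ Y, s⟩ :: L) M →
      Collapses (⟨X, s⟩ :: ⟨[], s'⟩ :: ⟨Y, s⟩ :: L) M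
  | constant {X s s'} : X ≠ [] → Collapses [⟨X, s⟩, ⟨[], s'⟩] []

namespace Collapses

variable {L M : List (SignedBlock α)}

theorem length_eq (h : Collapses L M) :
    L.length = M.length + 2 * L.countP (·.word.isEmpty) := by
  induction h with
  | refl h => simpa [List.countP_eq_zero] using h
  | rotate hr _ ih => rw [hr.perm.length_eq, hr.perm.countP_eq, ih]
  | merge hX hY _ ih =>
    simp only [List.length_cons, List.countP_cons, List.isEmpty_eq_false_iff.2, hX, hY,
      ne_eq, not_false_eq_true, List.append_eq_nil_iff, false_and, List.isEmpty_nil,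
      if_true, Bool.false_eq_true, if_false] at ih ⊢
    omega
  | constant hX => simp [hX]

theorem perm (h : Collapses L M) (hL : ∀ e ∈ L, e.word ≠ []) : L.Perm M := by
  induction h with
  | refl _ => exact .refl _
  | rotate hr _ ih => exact hr.perm.trans (ih fun e he => hL e (hr.mem_iff.2 he))
  | merge => simp at hL
  | constant => simp at hL

theorem sum_le {f : List α → ℕ} (hf : ∀ X Y, f (X ++ Y) ≤ f X + f Y) (h : Collapses L M) :
    (M.map fun e => f e.word).sum ≤ (L.map fun e => f e.word).sum := by
  induction h with
  | refl _ => exact le_rfl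
  | rotate hr _ ih => exact ih.trans_eq (hr.perm.map _).sum_eq.symm
  | @merge X Y _ _ _ _ _ _ _ ih =>
    have := hf X Y
    simp only [List.map_cons, List.sum_cons] at ih ⊢
    omega
  | constant _ => simp

theorem forall_mem {P : List α → Prop} (hP : ∀ X Y, P X → P Y → P (X ++ Y))
    (h : Collapses L M) (hL : ∀ e ∈ L, e.word ≠ [] → P e.word) : ∀ e ∈ M, P e.word := by
  induction h with
  | refl hne => exact fun e he => hL e he (hne e he)
  | rotate hr _ ih => exact ih fun e he => hL e (hr.mem_iff.2 he)
  | merge hX hY _ ih =>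
    refine ih fun e he _ => ?_
    simp only [List.forall_mem_cons] at hL
    rcases List.mem_cons.1 he with rfl | he
    · exact hP _ _ (hL.1 hX) (hL.2.2.1 hY)
    · exact hL.2.2.2 e he ‹_›
  | constant _ => simp

end Collapses

theorem IsAlternating.of_isRotated {L L' : List (SignedBlock α)} (h : IsAlternating L)
    (hr : L ~r L') : IsAlternating L' := by
  rwa [IsAlternating, ← Cycle.coe_eq_coe.2 hr]

theorem IsAlternating.exists_isRotated_nil {L : List (SignedBlock α)} (h : IsAlternating L)
    (hL : ¬∀ e ∈ L, e.word ≠ []) :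
    ∃ e s' l, L ~r e :: ⟨[], s'⟩ :: l := by
  push Not at hL
  obtain ⟨⟨X, s'⟩, hmem, rfl : X = []⟩ := hL
  obtain ⟨p, q, rfl⟩ := List.append_of_mem hmem
  have hr : p ++ ⟨[], s'⟩ :: q ~r ⟨[], s'⟩ :: q ++ p :=
    ⟨p.length, List.rotate_append_length_eq _ _⟩
  rcases List.eq_nil_or_concat (q ++ p) with hqp | ⟨l, e, hqp⟩
  · have := h.of_isRotated hr
    simp_all [IsAlternating, Abuts]
  · refine ⟨e, s', l, hr.trans ?_⟩
    rw [List.cons_append, hqp, List.concat_eq_append, ← List.cons_append]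
    exact List.isRotated_append

variable [DecidableEq α]

theorem sum_count_flatMap_word [Fintype α] (L : List (SignedBlock α)) :
    ∑ x, (L.flatMap word).count x = (L.map (·.word.length)).sum := by
  rw [← List.length_flatMap, ← Multiset.coe_card,
    ← Multiset.sum_count_eq_card (s := Finset.univ) (by simp)]
  simp

/-- The blocks `L` spell the conjugacy class of `w`, using the generator `x`, with either sign,
`n x` times. The counts are integers because they will be compared by subtraction. -/
def Spells (L : List (SignedBlock α)) (w : FreeGroup α) (n : α → ℤ) : Prop :=
  IsConj w (spell L) ∧ ∀ x, ((L.flatMap word).count x : ℤ) = n x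

theorem Spells.of_isRotated {L L' : List (SignedBlock α)} {w : FreeGroup α} {n : α → ℤ}
    (h : Spells L w n) (hr : L ~r L') : Spells L' w n :=
  ⟨h.1.trans (isConj_spell_of_isRotated hr), fun x => by
    rw [← h.2 x, (hr.perm.flatMap_right word).count_eq x]⟩

theorem Spells.merge {X Y : List α} {s s' : Bool} {L : List (SignedBlock α)} {w : FreeGroup α}
    {n : α → ℤ} (h : Spells (⟨X, s⟩ :: ⟨[], s'⟩ :: ⟨Y, s⟩ :: L) w n) :
    Spells (⟨X ++ Y, s⟩ :: L) w n := by
  simpa [Spells, spell, letters] using h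

theorem Spells.sum_length [Fintype α] {L : List (SignedBlock α)} {w : FreeGroup α} {n : α → ℤ}
    (h : Spells L w n) : (((L.map (·.word.length)).sum : ℕ) : ℤ) = ∑ x, n x := by
  rw [← sum_count_flatMap_word]
  push_cast
  exact Finset.sum_congr rfl fun x _ => h.2 x

/-- A cyclically reduced form of `w` contains the generator `x`, with either sign, `n x` times, and
its maximal constant-sign blocks are `L` in cyclic order. If all letters have the same sign there
are no junctions, and `L` is empty by convention. -/
inductive HasBlocks (w : FreeGroup α) (n : α → ℤ) : List (SignedBlock α) → Prop
  | constant {e : SignedBlock α} : Spells [e] w n → HasBlocks w n []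
  | alternating {L : List (SignedBlock α)} : IsStrict L → Spells L w n → HasBlocks w n L

theorem HasBlocks.exists_isCyclicallyReduced [Fintype α] {w : FreeGroup α} {n : α → ℤ}
    {L : List (SignedBlock α)} (h : HasBlocks w n L) :
    ∃ M, FreeGroup.IsCyclicallyReduced M ∧ IsConj w (FreeGroup.mk M) ∧
      (M.length : ℤ) = ∑ x, n x := by
  have hlen {K : List (SignedBlock α)} (hK : Spells K w n) :
      ((K.flatMap letters).length : ℤ) = ∑ x, n x := by
    rw [← hK.sum_length]
    simp [List.length_flatMap, letters]
  cases h with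
  | constant h =>
    exact ⟨_, by simpa using isCyclicallyReduced_letters _, h.1, hlen h⟩
  | alternating hL h => exact ⟨_, hL.isCyclicallyReduced, h.1, hlen h⟩

theorem HasBlocks.word_ne_nil {w : FreeGroup α} {n : α → ℤ} {L : List (SignedBlock α)}
    (h : HasBlocks w n L) : ∀ e ∈ L, e.word ≠ [] := by
  cases h with
  | constant _ => simp
  | alternating hL _ => exact hL.2

theorem HasBlocks.sum_length_le [Fintype α] {w : FreeGroup α} {n : α → ℤ}
    {L : List (SignedBlock α)} (h : HasBlocks w n L) :
    (((L.map (·.word.length)).sum : ℕ) : ℤ) ≤ ∑ x, n x := by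
  cases h with
  | constant h => simp [← h.sum_length]
  | alternating _ h => exact h.sum_length.le

theorem IsAlternating.exists_collapses {L : List (SignedBlock α)} (h : IsAlternating L) :
    ∃ L', Collapses L L' ∧ ∀ w n, Spells L w n → HasBlocks w n L' := by
  induction hk : L.length using Nat.strong_induction_on generalizing L with
  | _ k ih =>
    subst hk
    by_cases hne : ∀ e ∈ L, e.word ≠ []
    · exact ⟨L, .refl hne, fun w n hs => .alternating ⟨h, hne⟩ hs⟩
    obtain ⟨⟨X, s⟩, s', l, hr⟩ := h.exists_isRotated_nil hne
    have halt := h.of_isRotated hr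
    rcases l with _ | ⟨⟨Y, s''⟩, l⟩
    · have hX : X ≠ [] := by
        intro hX
        simp_all [IsAlternating, Abuts]
      refine ⟨[], .rotate hr (.constant hX), fun w n hs => .constant (e := ⟨X, s⟩) ?_⟩
      simpa [Spells, spell, letters] using hs.of_isRotated hr
    · obtain ⟨rfl, hX, hY, hmerged⟩ := halt.merge
      obtain ⟨L', hcol, hblocks⟩ := ih _ (by simp [hr.perm.length_eq]) hmerged rfl
      exact ⟨L', .rotate hr (.merge hX hY hcol),
        fun w n hs => hblocks w n (hs.of_isRotated hr).merge⟩

theorem exists_hasBlocks (w : FreeGroup α) : ∃ n L, HasBlocks w n L := by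
  obtain ⟨M, hM, hw⟩ := exists_isCyclicallyReduced_isConj w
  obtain ⟨K, hK, hspell⟩ := exists_isAlternating_spell_eq hM
  obtain ⟨L, -, hL⟩ := hK.exists_collapses
  exact ⟨_, L, hL w _ ⟨hspell ▸ hw, fun _ => rfl⟩⟩

end SignedBlock

section Trim

variable {α : Type*} [DecidableEq α]

/-- The transvection of the free group that fixes the generator `c` and multiplies every other
generator by `c` on the right. -/
def transvection (c : α) : FreeGroup α →* FreeGroup α :=
  FreeGroup.lift fun x => if x = c then .of c else .of x * .of c

/-- The image of the positive word `X` under `transvection c`, without its last letter, which is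
always `c`. -/
def trimWord (c : α) (X : List α) : List α :=
  [c].intercalate (X.map fun x => if x = c then [] else [x])

theorem trimWord_singleton (c x : α) : trimWord c [x] = if x = c then [] else [x] := by
  simp [trimWord]

theorem trimWord_cons (c x : α) {X : List α} (hX : X ≠ []) :
    trimWord c (x :: X) = (if x = c then [] else [x]) ++ c :: trimWord c X := by
  simp [trimWord, List.intercalate_cons_of_ne_nil, hX]

theorem count_self_trimWord_add_one (c : α) {X : List α} (hX : X ≠ []) :
    (trimWord c X).count c + 1 = X.length := by
  induction X with
  | nil => contradiction
  | cons x X ih =>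
    rcases eq_or_ne X [] with rfl | hX'
    · rw [trimWord_singleton]
      split_ifs <;> simp [*]
    · rw [trimWord_cons c x hX', List.count_append, List.count_cons_self, List.length_cons,
        ← ih hX']
      split_ifs <;> simp [*]

theorem self_mem_trimWord (c : α) {X : List α} (hX : 1 < X.length) : c ∈ trimWord c X := by
  have := count_self_trimWord_add_one c (List.length_pos_iff.1 (by omega : 0 < X.length))
  exact List.count_pos_iff.1 (by omega)

theorem count_trimWord_of_ne {c x : α} (hx : x ≠ c) (X : List α) :
    (trimWord c X).count x = X.count x := by
  induction X with
  | nil => simp [trimWord]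
  | cons y X ih =>
    rcases eq_or_ne X [] with rfl | hX
    · rw [trimWord_singleton]
      split_ifs <;> simp_all [hx.symm]
    · rw [trimWord_cons c y hX, List.count_append, List.count_cons_of_ne hx.symm, ih,
        List.count_cons]
      split_ifs <;> simp_all [hx.symm, add_comm]

theorem mem_trimWord_of_ne {c x : α} (hx : x ≠ c) {X : List α} :
    x ∈ trimWord c X ↔ x ∈ X := by
  rw [← List.count_pos_iff, count_trimWord_of_ne hx, List.count_pos_iff]

theorem trimWord_eq_nil_iff {c : α} {X : List α} (hX : X ≠ []) :
    trimWord c X = [] ↔ X = [c] := by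
  obtain ⟨x, X, rfl⟩ := List.exists_cons_of_ne_nil hX
  rcases eq_or_ne X [] with rfl | hX'
  · simp [trimWord_singleton]
  · simp [trimWord_cons, hX']

theorem head?_trimWord {c : α} {X : List α} (h : trimWord c X ≠ []) :
    (trimWord c X).head? = X.head? := by
  cases X with
  | nil => rfl
  | cons x X =>
    rcases eq_or_ne X [] with rfl | hX
    · grind [trimWord_singleton]
    · grind [trimWord_cons]

theorem getLast?_trimWord {c : α} {X : List α} (h : trimWord c X ≠ []) :
    (trimWord c X).getLast? = X.getLast? := by
  induction X with
  | nil => rfl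
  | cons x X ih =>
    rcases eq_or_ne X [] with rfl | hX
    · grind [trimWord_singleton]
    · rw [trimWord_cons c x hX]
      by_cases hnil : trimWord c X = []
      · rw [hnil, (trimWord_eq_nil_iff hX).1 hnil]
        simp
      · grind

end Trim

namespace SignedBlock

variable {α : Type*}

/-- The syllable that `transvection c` leaves in front of a block of the given sign. -/
def frame (c : α) (s : Bool) : FreeGroup α := if s then 1 else (.of c)⁻¹

theorem frame_not_inv_mul_frame (c : α) (s : Bool) :
    (frame c (!s))⁻¹ * frame c s = spell [⟨[c], s⟩] := by
  cases s <;> simp [frame, spell, letters, FreeGroup.of, FreeGroup.inv_mk, FreeGroup.invRev]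

variable [DecidableEq α] {c : α}

/-- The effect of `transvection c` on a maximal constant-sign block of a cyclic word: the letters
`c` it adds at the junctions between blocks cancel. -/
def trim (c : α) (e : SignedBlock α) : SignedBlock α := ⟨trimWord c e.word, e.sign⟩

theorem transvection_spell_singleton_mul_frame (c x : α) (s : Bool) :
    transvection c (spell [⟨[x], s⟩]) * frame c (!s) = frame c s * spell [⟨trimWord c [x], s⟩] := by
  have hneg : FreeGroup.mk [(x, false)] = (FreeGroup.of x)⁻¹ := rfl
  have hpos : FreeGroup.mk [(x, true)] = FreeGroup.of x := rfl
  rw [trimWord_singleton]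
  cases s <;> split_ifs with hx <;>
    simp [spell, letters, frame, transvection, hneg, hpos, hx, ← FreeGroup.one_eq_mk]

theorem transvection_spell_mul_frame {e : SignedBlock α} (he : e.word ≠ []) :
    transvection c (spell [e]) * frame c (!e.sign) = frame c e.sign * spell [e.trim c] := by
  obtain ⟨X, s⟩ := e
  induction X with
  | nil => contradiction
  | cons x X ih =>
    rcases eq_or_ne X [] with rfl | hX
    · exact transvection_spell_singleton_mul_frame c x s
    have hcons : spell [⟨x :: X, s⟩] = spell [⟨[x], s⟩] * spell [⟨X, s⟩] := by
      simp [spell, letters, FreeGroup.mul_mk]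
    have htrim : spell [trim c ⟨x :: X, s⟩] =
        spell [⟨trimWord c [x], s⟩] * spell [⟨[c], s⟩] * spell [trim c ⟨X, s⟩] := by
      simp [spell, letters, trim, FreeGroup.mul_mk, trimWord_cons c x hX, trimWord_singleton]
    calc transvection c (spell [⟨x :: X, s⟩]) * frame c (!s)
        = transvection c (spell [⟨[x], s⟩]) * (transvection c (spell [⟨X, s⟩]) * frame c (!s)) := by
          rw [hcons, map_mul, mul_assoc]
      _ = transvection c (spell [⟨[x], s⟩]) * (frame c s * spell [trim c ⟨X, s⟩]) := by
          rw [ih hX]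
      _ = frame c s * spell [⟨trimWord c [x], s⟩] * ((frame c (!s))⁻¹ * frame c s)
            * spell [trim c ⟨X, s⟩] := by
          rw [← transvection_spell_singleton_mul_frame]; group
      _ = frame c s * spell [trim c ⟨x :: X, s⟩] := by
          rw [frame_not_inv_mul_frame, htrim]; group

-- The frames between neighbouring blocks have opposite signs and cancel.
theorem transvection_spell_chain_mul_frame {e z : SignedBlock α} {l : List (SignedBlock α)}
    (h : (e :: (l ++ [z])).IsChain Abuts) (hne : ∀ f ∈ e :: l, f.word ≠ []) :
    transvection c (spell (e :: l)) * frame c z.sign =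
      frame c e.sign * spell ((e :: l).map (trim c)) := by
  induction l generalizing e with
  | nil =>
    obtain hz : z.sign = !e.sign := Bool.eq_not.2 (List.isChain_pair.1 h).1.symm
    rw [hz]
    exact transvection_spell_mul_frame (hne e (by simp))
  | cons f l ih =>
    rw [List.cons_append, List.isChain_cons_cons] at h
    have hf : f.sign = !e.sign := Bool.eq_not.2 h.1.1.symm
    rw [List.forall_mem_cons] at hne
    rw [spell_cons, map_mul, mul_assoc, ih h.2 hne.2, hf, ← mul_assoc,
      transvection_spell_mul_frame hne.1, mul_assoc, ← spell_cons]
    rfl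

theorem IsStrict.isConj_transvection {L : List (SignedBlock α)} (h : IsStrict L) :
    IsConj (transvection c (spell L)) (spell (L.map (trim c))) := by
  cases L with
  | nil => simp [spell, ← FreeGroup.one_eq_mk]
  | cons e l =>
    refine isConj_iff.2 ⟨(frame c e.sign)⁻¹, ?_⟩
    rw [inv_inv, mul_assoc, transvection_spell_chain_mul_frame h.1 h.2, inv_mul_cancel_left]

theorem isConj_transvection_spell_singleton {e : SignedBlock α} (he : e.word ≠ []) :
    IsConj (transvection c (spell [e])) (spell [⟨trimWord c e.word ++ [c], e.sign⟩]) := by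
  have happend : spell [⟨trimWord c e.word ++ [c], e.sign⟩] =
      spell [e.trim c] * spell [⟨[c], e.sign⟩] := by
    simp [spell, letters, trim, FreeGroup.mul_mk]
  refine isConj_iff.2 ⟨(frame c e.sign)⁻¹, ?_⟩
  rw [happend, ← frame_not_inv_mul_frame,
    eq_mul_inv_of_mul_eq (transvection_spell_mul_frame he)]
  group

theorem IsStrict.isAlternating_map_trim {L : List (SignedBlock α)} (h : IsStrict L) :
    IsAlternating (L.map (trim c)) := by
  rw [IsAlternating, ← Cycle.map_coe, Cycle.chain_map]
  refine chain_imp_of_mem (fun e he f hf hef => ⟨hef.1, fun hX hY => ?_, ?_⟩) h.1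
  · have hX := (trimWord_eq_nil_iff (h.2 e he)).1 hX
    have hY := (trimWord_eq_nil_iff (h.2 f hf)).1 hY
    exact hef.2.2 c (by simp [hX]) c (by simp [hY]) rfl
  · intro x hx y hy
    have hX : trimWord c e.word ≠ [] := by rintro hX; simp [trim, hX] at hx
    have hY : trimWord c f.word ≠ [] := by rintro hY; simp [trim, hY] at hy
    rw [trim, getLast?_trimWord hX] at hx
    rw [trim, head?_trimWord hY] at hy
    exact hef.2.2 x hx y hy

theorem sum_count_map_trim_add_length {L : List (SignedBlock α)} (hne : ∀ e ∈ L, e.word ≠ []) :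
    ((L.map (trim c)).flatMap word).count c + L.length = (L.map (·.word.length)).sum := by
  induction L with
  | nil => rfl
  | cons e L ih =>
    rw [List.forall_mem_cons] at hne
    have he := count_self_trimWord_add_one c hne.1
    have hL := ih hne.2
    simp only [List.map_cons, List.flatMap_cons, List.count_append, List.length_cons, trim,
      List.sum_cons] at hL ⊢
    omega

theorem count_map_trim_of_ne {x : α} (hx : x ≠ c) (L : List (SignedBlock α)) :
    ((L.map (trim c)).flatMap word).count x = (L.flatMap word).count x := by
  simp [List.count_flatMap, List.flatMap_map, Function.comp_def, trim, count_trimWord_of_ne hx]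

section Fintype

variable [Fintype α] {w : FreeGroup α} {n : α → ℤ} {L : List (SignedBlock α)}

theorem IsStrict.spells_map_trim (h : IsStrict L) (hs : Spells L w n) :
    Spells (L.map (trim c)) (transvection c w)
      (Function.update n c (∑ x, n x - L.length)) := by
  refine ⟨((transvection c).map_isConj hs.1).trans h.isConj_transvection, fun x => ?_⟩
  rcases eq_or_ne x c with rfl | hx
  · rw [Function.update_self, ← hs.sum_length,
      ← sum_count_map_trim_add_length (c := x) h.2]
    push_cast
    ring
  · rw [Function.update_of_ne hx, count_map_trim_of_ne hx, hs.2 x]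

theorem Spells.exists_transvection_singleton {e : SignedBlock α} (h : Spells [e] w n) :
    ∃ f, Spells [f] (transvection c w) (Function.update n c (∑ x, n x)) := by
  have hsum := h.sum_length
  have himage := (transvection c).map_isConj h.1
  obtain ⟨_ | ⟨x, X⟩, s⟩ := e
  · refine ⟨⟨[], s⟩, himage.trans (by simp [spell, letters, ← FreeGroup.one_eq_mk]), fun x => ?_⟩
    have := h.2 x
    simp_all [Function.update_apply]
  · refine ⟨_, himage.trans (isConj_transvection_spell_singleton (by simp)), fun y => ?_⟩
    rcases eq_or_ne y c with rfl | hy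
    · rw [Function.update_self, ← hsum]
      simp [count_self_trimWord_add_one]
    · rw [Function.update_of_ne hy, ← h.2 y]
      simp [count_trimWord_of_ne hy, hy.symm]

theorem HasBlocks.exists_transvection (h : HasBlocks w n L) (c : α) :
    ∃ L', HasBlocks (transvection c w) (Function.update n c (∑ x, n x - L.length)) L' ∧
      Collapses (L.map (trim c)) L' := by
  cases h with
  | constant h =>
    obtain ⟨f, hf⟩ := h.exists_transvection_singleton (c := c)
    exact ⟨[], .constant (by simpa using hf), .refl (by simp)⟩
  | alternating hL h =>
    obtain ⟨L', hcol, hblocks⟩ := (hL.isAlternating_map_trim (c := c)).exists_collapses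
    exact ⟨L', hblocks _ _ (hL.spells_map_trim h), hcol⟩

end Fintype

end SignedBlock

section RankTwo

open SignedBlock

theorem cyclen_eq_length {w : F} {M : List (Fin 2 × Bool)} (hM : FreeGroup.IsCyclicallyReduced M)
    (hw : IsConj w (FreeGroup.mk M)) : cyclen w = M.length := by
  obtain ⟨g, hg⟩ := isConj_iff.1 hw
  refine IsLeast.csInf_eq ⟨⟨g, ?_⟩, ?_⟩
  · rw [hg, len, FreeGroup.toWord_mk, hM.isReduced.reduce_eq]
  · rintro _ ⟨k, rfl⟩
    have hk : k * w * k⁻¹ = (k * g⁻¹) * FreeGroup.mk M * (k * g⁻¹)⁻¹ := by rw [← hg]; group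
    rw [hk]
    exact length_le_norm_conj hM _

theorem σ_apply (w : F) : σ w = transvection 1 w := by
  change FreeGroup.lift _ w = _
  congr 1
  ext i
  fin_cases i <;> simp [transvection, ga, gb]

theorem τ_apply (w : F) : τ w = transvection 0 w := by
  change FreeGroup.lift _ w = _
  congr 1
  ext i
  fin_cases i <;> simp [transvection, ga, gb]

variable {w : F} {n : Fin 2 → ℤ} {L : List (SignedBlock (Fin 2))}

namespace SignedBlock

theorem HasBlocks.cyclen_eq (h : HasBlocks w n L) : (cyclen w : ℤ) = n 0 + n 1 := by
  obtain ⟨M, hM, hw, hlen⟩ := h.exists_isCyclicallyReduced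
  rw [cyclen_eq_length hM hw, hlen, Fin.sum_univ_two]

theorem HasBlocks.exists_σ (h : HasBlocks w n L) :
    ∃ L', HasBlocks (σ w) ![n 0, n 0 + n 1 - L.length] L' ∧ Collapses (L.map (trim 1)) L' := by
  convert h.exists_transvection 1 using 4
  · exact σ_apply w
  · ext i; fin_cases i <;> simp

theorem HasBlocks.exists_τ (h : HasBlocks w n L) :
    ∃ L', HasBlocks (τ w) ![n 0 + n 1 - L.length, n 1] L' ∧ Collapses (L.map (trim 0)) L' := by
  convert h.exists_transvection 0 using 4
  · exact τ_apply w
  · ext i; fin_cases i <;> simp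

theorem HasBlocks.cyclen_σ_sub (h : HasBlocks w n L) :
    (cyclen (σ w) : ℤ) - cyclen w = n 0 - L.length := by
  obtain ⟨L', hL', -⟩ := h.exists_σ
  rw [hL'.cyclen_eq, h.cyclen_eq]
  simp only [Matrix.cons_val_zero, Matrix.cons_val_one]
  ring

end SignedBlock

/-- A word in which both generators occur. -/
def IsMixed (X : List (Fin 2)) : Prop := 0 ∈ X ∧ 1 ∈ X

theorem IsMixed.one_lt_length {X : List (Fin 2)} (h : IsMixed X) : 1 < X.length := by
  rcases X with _ | ⟨x, _ | ⟨y, X⟩⟩ <;> grind [IsMixed]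

theorem IsMixed.append_right {X : List (Fin 2)} (h : IsMixed X) (Y : List (Fin 2)) :
    IsMixed (X ++ Y) :=
  ⟨List.mem_append_left _ h.1, List.mem_append_left _ h.2⟩

theorem IsMixed.trimWord {X : List (Fin 2)} (h : IsMixed X) (c : Fin 2) :
    IsMixed (trimWord c X) := by
  have hc := self_mem_trimWord c h.one_lt_length
  fin_cases c
  · exact ⟨hc, (mem_trimWord_of_ne one_ne_zero).2 h.2⟩
  · exact ⟨(mem_trimWord_of_ne zero_ne_one).2 h.1, hc⟩

/-- The block words that survive the iteration of `σ`: the single letter `a` and the mixed words.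
The other words, the powers of `b`, are shortened by `σ`, and `aᵏ` with `1 < k` becomes mixed. -/
def IsSettled (X : List (Fin 2)) : Prop := X = [0] ∨ IsMixed X

theorem IsSettled.zero_mem {X : List (Fin 2)} (h : IsSettled X) : 0 ∈ X := by
  rcases h with rfl | h
  · simp
  · exact h.1

theorem isSettled_trimWord_one {X : List (Fin 2)} (h : 0 ∈ X) : IsSettled (trimWord 1 X) := by
  rcases le_or_gt X.length 1 with hX | hX
  · obtain rfl : X = [0] := by
      rcases X with _ | ⟨x, _ | ⟨y, X⟩⟩ <;> simp_all
    exact .inl (by simp [trimWord_singleton])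
  · exact .inr ⟨(mem_trimWord_of_ne zero_ne_one).2 h, self_mem_trimWord 1 hX⟩

theorem IsSettled.trimWord_one_eq_iff {X : List (Fin 2)} (h : IsSettled X) :
    trimWord 1 X = [0] ↔ X = [0] := by
  rcases h with rfl | h
  · simp [trimWord_singleton]
  · have hX := h.one_lt_length
    have htrim := (h.trimWord 1).one_lt_length
    refine iff_of_false ?_ ?_ <;> intro h0 <;> simp [h0] at hX htrim

theorem IsSettled.isMixed_trimWord_zero {X : List (Fin 2)} (h : IsSettled X)
    (hne : trimWord 0 X ≠ []) : IsMixed (trimWord 0 X) := by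
  rcases h with rfl | h
  · simp [trimWord_singleton] at hne
  · exact h.trimWord 0

/-- The number of blocks that consist of a single letter `a` or `a⁻¹`. -/
def singleCount (L : List (SignedBlock (Fin 2))) : ℕ := L.countP (·.word = [0])

namespace SignedBlock

-- `trimWord 1 X` is empty only for `X = [1]`, so no block vanishes here.
theorem HasBlocks.exists_σ_perm (h : HasBlocks w n L) (hL : ∀ e ∈ L, 0 ∈ e.word) :
    ∃ L', HasBlocks (σ w) ![n 0, n 0 + n 1 - L.length] L' ∧ (L.map (trim 1)).Perm L' ∧
      ∀ e ∈ L', IsSettled e.word := by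
  obtain ⟨L', hL', hcol⟩ := h.exists_σ
  have htrim : ∀ e ∈ L.map (trim 1), IsSettled e.word :=
    List.forall_mem_map.2 fun e he => isSettled_trimWord_one (hL e he)
  have hperm := hcol.perm fun e he => List.ne_nil_of_mem (htrim e he).zero_mem
  exact ⟨L', hL', hperm, fun e he => htrim e (hperm.mem_iff.2 he)⟩

theorem HasBlocks.exists_σ_of_isSettled (h : HasBlocks w n L) (hL : ∀ e ∈ L, IsSettled e.word) :
    ∃ L', HasBlocks (σ w) ![n 0, n 0 + n 1 - L.length] L' ∧ (∀ e ∈ L', IsSettled e.word) ∧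
      L'.length = L.length ∧ singleCount L' = singleCount L := by
  obtain ⟨L', hL', hperm, hsettled⟩ := h.exists_σ_perm fun e he => (hL e he).zero_mem
  refine ⟨L', hL', hsettled, by simpa using hperm.length_eq.symm, ?_⟩
  rw [singleCount, ← hperm.countP_eq, List.countP_map]
  refine List.countP_congr fun e he => ?_
  simp [trim, (hL e he).trimWord_one_eq_iff]

theorem HasBlocks.exists_τ_of_isSettled (h : HasBlocks w n L) (hL : ∀ e ∈ L, IsSettled e.word) :
    ∃ L', HasBlocks (τ w) ![n 0 + n 1 - L.length, n 1] L' ∧ (∀ e ∈ L', IsMixed e.word) ∧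
      L.length = L'.length + 2 * singleCount L := by
  obtain ⟨L', hL', hcol⟩ := h.exists_τ
  refine ⟨L', hL', hcol.forall_mem (fun _ Y hX _ => hX.append_right Y) ?_, ?_⟩
  · exact List.forall_mem_map.2 fun e he => (hL e he).isMixed_trimWord_zero
  · have hcount : (L.map (trim 0)).countP (·.word.isEmpty) = singleCount L := by
      rw [List.countP_map]
      refine List.countP_congr fun e he => ?_
      simp [trim, trimWord_eq_nil_iff (List.ne_nil_of_mem (hL e he).zero_mem)]
    rw [← hcount, ← hcol.length_eq, List.length_map]

theorem singleCount_eq_zero (hL : ∀ e ∈ L, IsMixed e.word) : singleCount L = 0 := by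
  refine List.countP_eq_zero.2 fun e he h0 => ?_
  have := (hL e he).one_lt_length
  simp_all

theorem HasBlocks.cyclen_σ_τ_pow_sub (h : HasBlocks w n L) (hL : ∀ e ∈ L, IsSettled e.word)
    (m : ℕ) :
    (cyclen (σ ((τ ^ m) w)) : ℤ) - cyclen ((τ ^ m) w) =
      n 0 - L.length + m * (n 1 - L.length + 2 * singleCount L) := by
  induction m generalizing w n L with
  | zero => simpa using h.cyclen_σ_sub
  | succ m ih =>
    obtain ⟨L', hL', hmixed, hlen⟩ := h.exists_τ_of_isSettled hL
    rw [pow_succ, MulAut.mul_apply, ih hL' fun e he => .inr (hmixed e he),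
      singleCount_eq_zero hmixed, hlen]
    simp only [Matrix.cons_val_zero, Matrix.cons_val_one]
    push_cast [hlen]
    ring

end SignedBlock

/-- The length of `X` if `X` is a power of `b`, and `0` otherwise. -/
def pureLength (X : List (Fin 2)) : ℕ := if 0 ∈ X then 0 else X.length

theorem pureLength_append_le (X Y : List (Fin 2)) :
    pureLength (X ++ Y) ≤ pureLength X + pureLength Y := by
  grind [pureLength]

theorem pureLength_le_length (X : List (Fin 2)) : pureLength X ≤ X.length := by
  grind [pureLength]

theorem pureLength_trimWord_zero_le (X : List (Fin 2)) :
    pureLength (trimWord 0 X) ≤ pureLength X := by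
  rcases le_or_gt X.length 1 with hX | hX
  · rcases X with _ | ⟨x, _ | ⟨y, X⟩⟩
    · simp [trimWord]
    · by_cases hx : x = 0 <;> simp [trimWord_singleton, hx, pureLength]
    · simp at hX
  · simp [pureLength, self_mem_trimWord 0 hX]

theorem pureLength_trimWord_one_le (X : List (Fin 2)) :
    pureLength (trimWord 1 X) ≤ pureLength X - 1 := by
  by_cases h0 : 0 ∈ X
  · simp [pureLength, mem_trimWord_of_ne zero_ne_one, h0]
  rcases eq_or_ne X [] with rfl | hX
  · simp [pureLength, trimWord]
  have h0' : 0 ∉ trimWord 1 X := by rwa [mem_trimWord_of_ne zero_ne_one]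
  have hall : (trimWord 1 X).count 1 = (trimWord 1 X).length :=
    List.count_eq_length.2 fun x hx => by
      fin_cases x
      · exact absurd hx h0'
      · rfl
  have := count_self_trimWord_add_one 1 hX
  simp only [pureLength, h0, h0', if_false]
  omega

theorem sum_pureLength_trim_one_le (L : List (SignedBlock (Fin 2))) :
    ((L.map (trim 1)).map fun e => pureLength e.word).sum ≤
      (L.map fun e => pureLength e.word).sum - 1 := by
  induction L with
  | nil => simp
  | cons e L ih =>
    have := pureLength_trimWord_one_le e.word
    simp only [List.map_cons, List.sum_cons, trim] at ih ⊢
    omega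

/-- A potential for the number of factors `σ` that suffice to settle all blocks of `w`: it is
`0` when they are settled and otherwise exceeds by one a bound for the total length of the blocks
that are powers of `b`. -/
def SettlesWithin (w : F) : ℕ → Prop
  | 0 => ∃ n L, HasBlocks w n L ∧ ∀ e ∈ L, IsSettled e.word
  | k + 1 => ∃ n L, HasBlocks w n L ∧ (L.map fun e => pureLength e.word).sum ≤ k

theorem settlesWithin_cyclen_add_one (u : F) : SettlesWithin u (cyclen u + 1) := by
  obtain ⟨n, L, h⟩ := exists_hasBlocks u
  have hlen : (L.map (·.word.length)).sum ≤ cyclen u := by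
    rw [← Int.ofNat_le, h.cyclen_eq, ← Fin.sum_univ_two]
    exact h.sum_length_le
  exact ⟨n, L, h, (List.sum_le_sum fun e _ => pureLength_le_length e.word).trans hlen⟩

namespace SettlesWithin

variable {k : ℕ}

theorem map_τ (h : SettlesWithin w k) : SettlesWithin (τ w) k := by
  rcases k with _ | k
  · obtain ⟨n, L, h, hL⟩ := h
    obtain ⟨L', hL', hmixed, -⟩ := h.exists_τ_of_isSettled hL
    exact ⟨_, L', hL', fun e he => .inr (hmixed e he)⟩
  · obtain ⟨n, L, h, hL⟩ := h
    obtain ⟨L', hL', hcol⟩ := h.exists_τ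
    refine ⟨_, L', hL', (hcol.sum_le pureLength_append_le).trans (le_trans ?_ hL)⟩
    rw [List.map_map]
    exact List.sum_le_sum fun e _ => pureLength_trimWord_zero_le e.word

theorem map_σ (h : SettlesWithin w k) : SettlesWithin (σ w) (k - 1) := by
  rcases k with _ | _ | k
  · obtain ⟨n, L, h, hL⟩ := h
    obtain ⟨L', hL', hsettled, -⟩ := h.exists_σ_of_isSettled hL
    exact ⟨_, L', hL', hsettled⟩
  · obtain ⟨n, L, h, hL⟩ := h
    have h0 : ∀ e ∈ L, 0 ∈ e.word := by
      intro e he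
      have hzero : pureLength e.word = 0 :=
        Nat.le_zero.1 ((List.le_sum_of_mem (List.mem_map_of_mem he)).trans hL)
      by_contra h0
      simp [pureLength, h0, h.word_ne_nil e he] at hzero
    obtain ⟨L', hL', -, hsettled⟩ := h.exists_σ_perm h0
    exact ⟨_, L', hL', hsettled⟩
  · obtain ⟨n, L, h, hL⟩ := h
    obtain ⟨L', hL', hcol⟩ := h.exists_σ
    refine ⟨_, L', hL', (hcol.sum_le pureLength_append_le).trans ?_⟩
    have := sum_pureLength_trim_one_le L
    omega

theorem map_τ_pow (h : SettlesWithin w k) (m : ℕ) : SettlesWithin ((τ ^ m) w) k := by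
  induction m with
  | zero => simpa using h
  | succ m ih => simpa only [pow_succ', MulAut.mul_apply] using ih.map_τ

theorem map_σ_pow (h : SettlesWithin w k) (l : ℕ) : SettlesWithin ((σ ^ l) w) (k - l) := by
  induction l with
  | zero => simpa using h
  | succ l ih => simpa only [pow_succ', MulAut.mul_apply, Nat.sub_sub] using ih.map_σ

theorem map_chainC1 (h : SettlesWithin w k) (c : List (ℕ × ℕ)) :
    SettlesWithin (chainC1 c w) (k - sigmaCount c) := by
  induction c with
  | nil => simpa [chainC1, sigmaCount] using h
  | cons p c ih =>
    have := (ih.map_σ_pow p.1).map_τ_pow p.2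
    simpa [chainC1, sigmaCount, Nat.sub_sub, add_comm] using this

end SettlesWithin

end RankTwo

/-- Lemma 4.1 (i). -/
theorem stmt3 (u : F) (m : ℕ) (c₁ : List (ℕ × ℕ)) (hne : c₁ ≠ [])
    (hσ : cyclen u + 1 ≤ sigmaCount c₁) :
    (cyclen (σ ((τ ^ m * σ * chainC1 c₁) u)) : ℤ) - cyclen ((τ ^ m * σ * chainC1 c₁) u)
      = ((cyclen (σ ((τ ^ m * chainC1 c₁) u)) : ℤ) - cyclen ((τ ^ m * chainC1 c₁) u))
        + m * ((cyclen (σ (chainC1 c₁ u)) : ℤ) - cyclen (chainC1 c₁ u)) := by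
  have hsettles := (settlesWithin_cyclen_add_one u).map_chainC1 c₁
  rw [Nat.sub_eq_zero_of_le hσ] at hsettles
  obtain ⟨n, L, hw, hL⟩ := hsettles
  obtain ⟨L', hσw, hL', hlength, hsingle⟩ := hw.exists_σ_of_isSettled hL
  simp only [MulAut.mul_apply]
  rw [hσw.cyclen_σ_τ_pow_sub hL', hw.cyclen_σ_τ_pow_sub hL, hw.cyclen_σ_sub, hlength, hsingle]
  simp only [Matrix.cons_val_zero, Matrix.cons_val_one]
  ring
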